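/- arXiv:1102.4088 — 3 statements merged into one kernel-verified Lean document; each statement's English description precedes it below -/
import Mathlib

section
/- Let Γ be an abelian group and A a Γ-graded ring with degree-zero subring A_0. Then A_0 has the invariant basis number property (i.e., A_0^m ≅ A_0^n as A_0-modules implies m = n) if and only if A has invariant basis number in the graded sense, i.e., for all natural numbers m and n, the existence of a graded right A-module isomorphism A^m ≅ A^n (where A^k carries the grading (A^k)_γ = (A_γ)^k) implies m = n. -/
/-!
For a Γ-graded ring A: the degree-zero subring A_0 has the invariant basis
number property iff A has invariant basis number in the graded sense, i.e.
a graded right A-module isomorphism A^m ≅ A^n (trivial shifts) forces m = n.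
-/

/-- A graded isomorphism `A^m(ᾱ) ≅ A^n(δ̄)` of shifted graded free *right*
`A`-modules. -/
def GradedRightFreeIso {Γ : Type*} [AddCommGroup Γ] {A : Type*} [Ring A]
    (𝒜 : Γ → AddSubgroup A) {m n : ℕ} (α : Fin m → Γ) (δ : Fin n → Γ) : Prop :=
  ∃ φ : (Fin m → A) ≃+ (Fin n → A),
    (∀ (v : Fin m → A) (a : A), φ (fun i => v i * a) = fun j => φ v j * a) ∧
    ∀ (γ : Γ) (v : Fin m → A), (∀ i, v i ∈ 𝒜 (γ + α i)) ↔ ∀ j, φ v j ∈ 𝒜 (γ + δ j)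

/-- An isomorphism of free right modules `R^m ≅ R^n` over a ring `R`:
an additive bijection commuting with the (componentwise) right `R`-action. -/
def RightFreeModuleIso (R : Type*) [Ring R] (m n : ℕ) : Prop :=
  ∃ φ : (Fin m → R) ≃+ (Fin n → R),
    ∀ (v : Fin m → R) (c : R), φ (fun i => v i * c) = fun j => φ v j * c

open Matrix in
/-- A right-linear additive map between finite free right modules is left multiplication by a
matrix. -/
theorem AddMonoidHom.exists_eq_mulVec_of_map_mul_right {R : Type*} [Ring R] {m n : ℕ}
    (φ : (Fin m → R) →+ (Fin n → R))
    (hφ : ∀ (v : Fin m → R) (c : R), φ (fun i => v i * c) = fun j => φ v j * c) :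
    ∃ M : Matrix (Fin n) (Fin m) R, ∀ v, φ v = M *ᵥ v := by
  refine ⟨Matrix.of fun j i => φ (Pi.single i 1) j, fun v => ?_⟩
  have hv : v = ∑ i, fun k => (Pi.single i 1 : Fin m → R) k * v i := by
    ext k
    simp [Finset.sum_apply, Pi.single_apply]
  conv_lhs => rw [hv, map_sum]
  ext j
  simp [hφ, Finset.sum_apply, Matrix.mulVec, dotProduct]

/-- Isomorphic finite free right modules are related by mutually inverse matrices. -/
theorem RightFreeModuleIso.exists_matrix {R : Type*} [Ring R] {m n : ℕ}
    (h : RightFreeModuleIso R m n) :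
    ∃ (M : Matrix (Fin n) (Fin m) R) (N : Matrix (Fin m) (Fin n) R), N * M = 1 ∧ M * N = 1 := by
  obtain ⟨φ, hφ⟩ := h
  have hψ (w : Fin n → R) (c : R) : φ.symm (fun j => w j * c) = fun i => φ.symm w i * c := by
    rw [AddEquiv.symm_apply_eq, hφ]
    simp
  obtain ⟨M, hM⟩ := φ.toAddMonoidHom.exists_eq_mulVec_of_map_mul_right hφ
  obtain ⟨N, hN⟩ := φ.symm.toAddMonoidHom.exists_eq_mulVec_of_map_mul_right hψ
  refine ⟨M, N, Matrix.ext_of_mulVec_single fun i => ?_, Matrix.ext_of_mulVec_single fun j => ?_⟩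
  · rw [← Matrix.mulVec_mulVec, ← hM, ← hN, Matrix.one_mulVec]
    simp
  · rw [← Matrix.mulVec_mulVec, ← hN, ← hM, Matrix.one_mulVec]
    simp

section GradeZero

variable {Γ : Type*} [AddCommGroup Γ] {A : Type*} [Ring A] (𝒜 : Γ → AddSubgroup A)

open Matrix in
/-- Left multiplication by a matrix with entries of degree zero preserves degrees. -/
theorem mulVec_mem_of_gradeZero [SetLike.GradedMonoid 𝒜] {m n : ℕ}
    {M : Matrix (Fin n) (Fin m) A} (hM : ∀ j i, M j i ∈ 𝒜 0) {γ : Γ} {v : Fin m → A}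
    (hv : ∀ i, v i ∈ 𝒜 γ) (j : Fin n) : (M *ᵥ v) j ∈ 𝒜 γ := by
  rw [Matrix.mulVec, dotProduct]
  exact sum_mem fun i _ => by simpa using SetLike.mul_mem_graded (hM j i) (hv i)

/-- An isomorphism of free modules over the degree-zero subring extends to a graded isomorphism. -/
theorem RightFreeModuleIso.gradedRightFreeIso [DecidableEq Γ] [GradedRing 𝒜] {m n : ℕ}
    (h : RightFreeModuleIso (𝒜 0) m n) :
    GradedRightFreeIso 𝒜 (fun _ : Fin m => (0 : Γ)) (fun _ : Fin n => (0 : Γ)) := by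
  obtain ⟨M, N, hNM, hMN⟩ := h.exists_matrix
  let ι : 𝒜 0 →+* A := (SetLike.GradeZero.subring 𝒜).subtype
  have hNM' : N.map ι * M.map ι = 1 := by rw [← Matrix.map_mul, hNM]; simp
  have hMN' : M.map ι * N.map ι = 1 := by rw [← Matrix.map_mul, hMN]; simp
  have hM (j i) : M.map ι j i ∈ 𝒜 0 := (M j i).2
  have hN (i j) : N.map ι i j ∈ 𝒜 0 := (N i j).2
  refine ⟨{ toFun := (M.map ι).mulVec
            invFun := (N.map ι).mulVec
            left_inv := fun v => by simp [hNM']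
            right_inv := fun w => by simp [hMN']
            map_add' := Matrix.mulVec_add _ }, fun v a => ?_, fun γ v => ?_⟩
  · ext j
    simp [Matrix.mulVec, dotProduct, Finset.sum_mul, mul_assoc]
  · simp only [add_zero]
    refine ⟨fun hv => mulVec_mem_of_gradeZero 𝒜 hM hv, fun hv i => ?_⟩
    have := mulVec_mem_of_gradeZero 𝒜 hN hv i
    simpa [hNM'] using this

/-- A graded isomorphism of graded free modules restricts to the degree-zero components. -/
theorem GradedRightFreeIso.rightFreeModuleIso [DecidableEq Γ] [GradedRing 𝒜] {m n : ℕ}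
    (h : GradedRightFreeIso 𝒜 (fun _ : Fin m => (0 : Γ)) (fun _ : Fin n => (0 : Γ))) :
    RightFreeModuleIso (𝒜 0) m n := by
  obtain ⟨φ, hφ, hdeg⟩ := h
  replace hdeg (v : Fin m → A) : (∀ i, v i ∈ 𝒜 0) ↔ ∀ j, φ v j ∈ 𝒜 0 := by
    simpa using hdeg 0 v
  have hsymm (w : Fin n → 𝒜 0) : ∀ i, φ.symm (fun j => (w j : A)) i ∈ 𝒜 0 := by
    rw [hdeg, AddEquiv.apply_symm_apply]
    exact fun j => (w j).2
  refine ⟨{ toFun := fun v j => ⟨φ (fun i => (v i : A)) j, (hdeg _).1 (fun i => (v i).2) j⟩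
            invFun := fun w i => ⟨φ.symm (fun j => (w j : A)) i, hsymm w i⟩
            left_inv := fun v => by ext; simp
            right_inv := fun w => by ext; simp
            map_add' := fun v w => by
              ext j
              exact congrFun (map_add φ (fun i => (v i : A)) fun i => (w i : A)) j },
    fun v c => ?_⟩
  ext j
  exact congrFun (hφ (fun i => (v i : A)) c) j

end GradeZero

theorem gradeZero_IBN_iff_graded_IBN
    {Γ : Type*} [AddCommGroup Γ] [DecidableEq Γ]
    {A : Type*} [Ring A] (𝒜 : Γ → AddSubgroup A) [GradedRing 𝒜] :
    (∀ m n : ℕ, RightFreeModuleIso (𝒜 0) m n → m = n) ↔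
    (∀ m n : ℕ,
      GradedRightFreeIso 𝒜 (fun _ : Fin m => (0 : Γ)) (fun _ : Fin n => (0 : Γ)) →
      m = n) :=
  ⟨fun H m n h => H m n (h.rightFreeModuleIso 𝒜), fun H m n h => H m n (h.gradedRightFreeIso 𝒜)⟩
end

section
/- Let n be a prime number and let H = {q ∈ ℚ : q = a/n^k for some a ∈ ℤ and k ∈ ℕ} be the additive subgroup of n-adic fractions of ℚ. If φ : H → H is an additive group automorphism such that φ(q) ≥ 0 whenever q ∈ H and q ≥ 0, then there exists j ∈ ℤ such that φ(q) = n^j · q for all q ∈ H. -/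
/-!
For a prime n, let H = {a/n^k : a ∈ ℤ, k ∈ ℕ} ⊆ ℚ be the additive group of
n-adic fractions.  Every additive automorphism of H preserving nonnegativity
is multiplication by n^j for some j ∈ ℤ.
-/

/-- An additive map from a subgroup of `ℚ` to `ℚ` is homogeneous. -/
theorem AddSubgroup.rat_map_mul_comm {H : AddSubgroup ℚ} (f : H →+ ℚ) (x y : H) :
    f x * (y : ℚ) = f y * (x : ℚ) := by
  have hx : ((x : ℚ).den : ℚ) ≠ 0 := by exact_mod_cast (x : ℚ).den_nz
  have hy : ((y : ℚ).den : ℚ) ≠ 0 := by exact_mod_cast (y : ℚ).den_nz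
  have hxn := Rat.mul_den_eq_num (x : ℚ)
  have hyn := Rat.mul_den_eq_num (y : ℚ)
  have h : (((x : ℚ).den : ℤ) * (y : ℚ).num) • x = (((y : ℚ).den : ℤ) * (x : ℚ).num) • y := by
    apply Subtype.ext
    simp only [AddSubgroup.coe_zsmul, zsmul_eq_mul, Int.cast_mul, Int.cast_natCast]
    rw [← hxn, ← hyn]
    ring
  have hf := congrArg f h
  simp only [map_zsmul, zsmul_eq_mul, Int.cast_mul, Int.cast_natCast] at hf
  rw [← hxn, ← hyn] at hf
  apply mul_left_cancel₀ (mul_ne_zero hx hy)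
  linear_combination hf

theorem order_preserving_automorphism_of_nadic_fractions
    (n : ℕ) (hn : n.Prime)
    (H : AddSubgroup ℚ)
    (hH : ∀ q : ℚ, q ∈ H ↔ ∃ (a : ℤ) (k : ℕ), q = (a : ℚ) / (n : ℚ) ^ k)
    (φ : H ≃+ H)
    (hpos : ∀ q : H, 0 ≤ (q : ℚ) → 0 ≤ ((φ q : H) : ℚ)) :
    ∃ j : ℤ, ∀ q : H, ((φ q : H) : ℚ) = (n : ℚ) ^ j * (q : ℚ) := by
  have hn0 : (n : ℚ) ≠ 0 := by exact_mod_cast hn.ne_zero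
  have h1 : (1 : ℚ) ∈ H := (hH 1).2 ⟨1, 0, by simp⟩
  let e : H := ⟨1, h1⟩
  have hφ : ∀ q : H, ((φ q : H) : ℚ) = ((φ e : H) : ℚ) * (q : ℚ) := fun q => by
    simpa [e] using AddSubgroup.rat_map_mul_comm (H.subtype.comp φ.toAddMonoidHom) q e
  obtain ⟨a, k, hc⟩ := (hH _).1 (φ e).2
  obtain ⟨b, l, hd⟩ := (hH _).1 (φ.symm e).2
  have hcd : (1 : ℚ) = ((φ e : H) : ℚ) * ((φ.symm e : H) : ℚ) := by
    simpa [e] using hφ (φ.symm e)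
  have hc0 : 0 ≤ ((φ e : H) : ℚ) := hpos e zero_le_one
  have hnk : (0 : ℚ) < (n : ℚ) ^ k := pow_pos (by exact_mod_cast hn.pos) k
  have ha : 0 ≤ a := by
    rw [hc, le_div_iff₀ hnk, zero_mul] at hc0
    exact_mod_cast hc0
  lift a to ℕ using ha
  have hab : (a : ℤ) * b = ((n ^ (k + l) : ℕ) : ℤ) := by
    rw [hc, hd] at hcd
    field_simp at hcd
    have : (a : ℚ) * b = (n : ℚ) ^ (k + l) := by
      rw [pow_add]
      simpa using hcd.symm
    exact_mod_cast this
  have hdvd : a ∣ n ^ (k + l) := Int.natCast_dvd_natCast.1 ⟨b, hab.symm⟩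
  obtain ⟨m, -, rfl⟩ := (Nat.dvd_prime_pow hn).1 hdvd
  refine ⟨(m : ℤ) - k, fun q => ?_⟩
  rw [hφ q, hc, zpow_sub₀ hn0]
  simp
end

section
/- Let Γ be an abelian group and A a Γ-graded field. Let R = M_{n_1}(A)(δ̄^{(1)}) × ⋯ × M_{n_l}(A)(δ̄^{(l)}) be a graded matricial A-algebra, where δ̄^{(s)} ∈ Γ^{n_s} for each s. Let P, Q and G be graded finitely generated projective right R-modules. If P ⊕ G and Q ⊕ G are isomorphic as graded right R-modules, then P and Q are isomorphic as graded right R-modules. -/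
open MulOpposite

/-!
Cancellation for graded matricial algebras over a graded field: if R is a
finite product of shifted graded matrix algebras M_{n_s}(A)(δ̄^{(s)}) over a
Γ-graded field A, and P, Q, G are graded finitely generated projective right
R-modules with P ⊕ G ≅ Q ⊕ G as graded right R-modules, then P ≅ Q as graded
right R-modules.  Right R-modules are formalized as Rᵐᵒᵖ-modules.
-/

/-- The underlying ring of a graded matricial algebra: a finite product of
matrix rings over `A`. -/
abbrev MatricialAlg (A : Type*) [Ring A] {l : ℕ} (n : Fin l → ℕ) : Type _ :=
  ∀ s : Fin l, Matrix (Fin (n s)) (Fin (n s)) A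

/-- The `lam`-component of the grading on the graded matricial algebra
`M_{n_1}(A)(δ̄^{(1)}) × ⋯ × M_{n_l}(A)(δ̄^{(l)})`. -/
def matricialGrading {Γ : Type*} [AddCommGroup Γ] {A : Type*} [Ring A]
    (𝒜 : Γ → AddSubgroup A) {l : ℕ} {n : Fin l → ℕ}
    (δ : ∀ s : Fin l, Fin (n s) → Γ) (lam : Γ) :
    AddSubgroup (MatricialAlg A n) where
  carrier := {x | ∀ s i j, x s i j ∈ 𝒜 (lam + δ s j - δ s i)}
  add_mem' := fun h1 h2 s i j => add_mem (h1 s i j) (h2 s i j)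
  zero_mem' := fun s i j => zero_mem _
  neg_mem' := fun h s i j => neg_mem (h s i j)

open SetLike.GradeZero (subring)

/-- An additive map that shifts degrees by `c` commutes with taking homogeneous components. -/
theorem DirectSum.decompose_map_of_shift {Γ : Type*} [AddCommGroup Γ] [DecidableEq Γ]
    {M N : Type*} [AddCommGroup M] [AddCommGroup N]
    (ℳ : Γ → AddSubgroup M) (𝒩 : Γ → AddSubgroup N)
    [DirectSum.Decomposition ℳ] [DirectSum.Decomposition 𝒩] (f : M →+ N) (c : Γ)
    (hf : ∀ γ, ∀ x ∈ ℳ γ, f x ∈ 𝒩 (γ + c)) (x : M) (γ : Γ) :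
    (DirectSum.decompose 𝒩 (f x) γ : N) = f (DirectSum.decompose ℳ x (γ - c)) := by
  induction x using DirectSum.Decomposition.inductionOn ℳ with
  | zero => simp
  | add m m' h h' =>
    simp only [map_add, DirectSum.decompose_add, DirectSum.add_apply, AddSubgroup.coe_add, h, h']
  | @homogeneous i m =>
    by_cases h : i + c = γ
    · subst h
      rw [DirectSum.decompose_of_mem_same _ (hf i m m.2), add_sub_cancel_right,
        DirectSum.decompose_of_mem_same _ m.2]
    · rw [DirectSum.decompose_of_mem_ne _ (hf i m m.2) h,
        DirectSum.decompose_of_mem_ne _ m.2 (fun h' => h (by rw [h', sub_add_cancel])), map_zero]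

section GradedField

variable {Γ : Type*} [AddCommGroup Γ] [DecidableEq Γ] {A : Type*} [CommRing A]
  (𝒜 : Γ → AddSubgroup A) [GradedRing 𝒜]

theorem exists_homogeneous_inverse {γ : Γ} {a : A} (ha : a ∈ 𝒜 γ) (hu : IsUnit a) :
    ∃ b ∈ 𝒜 (-γ), a * b = 1 := by
  obtain ⟨b, hb⟩ := hu.exists_right_inv
  refine ⟨DirectSum.decompose 𝒜 b (-γ), SetLike.coe_mem _, ?_⟩
  rw [← DirectSum.coe_decompose_mul_add_of_left_mem 𝒜 ha, hb, add_neg_cancel]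
  exact DirectSum.decompose_of_mem_same 𝒜 (SetLike.GradedOne.one_mem)

theorem isField_gradeZero [Nontrivial A]
    (hfield : ∀ (γ : Γ) (a : A), a ∈ 𝒜 γ → a ≠ 0 → IsUnit a) : IsField (subring 𝒜) where
  exists_pair_ne := ⟨0, 1, zero_ne_one⟩
  mul_comm := mul_comm
  mul_inv_cancel := by
    rintro ⟨a, ha⟩ h
    obtain ⟨b, hb, hab⟩ := exists_homogeneous_inverse 𝒜 ha
      (hfield 0 a ha fun h0 => h (Subtype.ext h0))
    rw [neg_zero] at hb
    exact ⟨⟨b, hb⟩, Subtype.ext hab⟩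

/-- Every component of a graded field is spanned over the degree zero part by one element. -/
theorem exists_component_generator
    (hfield : ∀ (γ : Γ) (a : A), a ∈ 𝒜 γ → a ≠ 0 → IsUnit a) (γ : Γ) :
    ∃ u ∈ 𝒜 γ, ∀ a ∈ 𝒜 γ, ∃ c ∈ 𝒜 0, a = c * u := by
  by_cases h : ∃ u ∈ 𝒜 γ, u ≠ 0
  · obtain ⟨u, hu, hu0⟩ := h
    obtain ⟨v, hv, huv⟩ := exists_homogeneous_inverse 𝒜 hu (hfield γ u hu hu0)
    refine ⟨u, hu, fun a ha => ⟨a * v, ?_, ?_⟩⟩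
    · simpa using SetLike.mul_mem_graded ha hv
    · rw [mul_assoc, mul_comm v, huv, mul_one]
  · push Not at h
    exact ⟨0, zero_mem _, fun a ha => ⟨0, zero_mem _, by rw [h a ha, zero_mul]⟩⟩

/-- Indices of degree `c i` split into classes linked by homogeneous units: each class has a
representative `ρ i`, joined to `i` by a homogeneous unit `u i` with inverse `v i`. -/
theorem exists_representatives
    (hfield : ∀ (γ : Γ) (a : A), a ∈ 𝒜 γ → a ≠ 0 → IsUnit a) {I : Type*} (c : I → Γ) :
    ∃ (ρ : I → I) (u v : I → A), (∀ i, u i ∈ 𝒜 (c i - c (ρ i))) ∧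
      (∀ i, v i ∈ 𝒜 (c (ρ i) - c i)) ∧ (∀ i, u i * v i = 1) ∧
      ∀ i j, ∀ a ∈ 𝒜 (c j - c i), a ≠ 0 → ρ i = ρ j := by
  let S : Setoid I :=
    { r := fun i j => ∃ a ∈ 𝒜 (c j - c i), IsUnit a
      iseqv :=
        { refl := fun i => ⟨1, by simpa using SetLike.GradedOne.one_mem, isUnit_one⟩
          symm := by
            rintro i j ⟨a, ha, hu⟩
            obtain ⟨b, hb, hab⟩ := exists_homogeneous_inverse 𝒜 ha hu
            exact ⟨b, by simpa using hb, .of_mul_eq_one_right a hab⟩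
          trans := by
            rintro i j k ⟨a, ha, hu⟩ ⟨b, hb, hv⟩
            exact ⟨a * b, by simpa using SetLike.mul_mem_graded ha hb, hu.mul hv⟩ } }
  have key : ∀ i, ∃ u ∈ 𝒜 (c i - c (Quotient.mk S i).out),
      ∃ v ∈ 𝒜 (c (Quotient.mk S i).out - c i), u * v = 1 := by
    intro i
    obtain ⟨u, hu, hunit⟩ := Quotient.mk_out (s := S) i
    obtain ⟨v, hv, huv⟩ := exists_homogeneous_inverse 𝒜 hu hunit
    exact ⟨u, hu, v, by simpa using hv, huv⟩
  choose u hu v hv huv using key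
  refine ⟨fun i => (Quotient.mk S i).out, u, v, hu, hv, huv, fun i j a ha h0 => ?_⟩
  have : Quotient.mk S i = Quotient.mk S j := Quotient.sound ⟨a, ha, hfield _ a ha h0⟩
  simp only [this]

/-- The homogeneous components of a finite graded module over a graded field are finite
dimensional over the degree zero part. -/
theorem exists_fg_component_le
    (hfield : ∀ (γ : Γ) (a : A), a ∈ 𝒜 γ → a ≠ 0 → IsUnit a)
    {M : Type*} [AddCommGroup M] [Module A M] [Module.Finite A M] (ℳ : Γ → AddSubgroup M)
    [DirectSum.Decomposition ℳ] (hM : ∀ γ lam, ∀ a ∈ 𝒜 lam, ∀ x ∈ ℳ γ, a • x ∈ ℳ (γ + lam))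
    (γ : Γ) : ∃ N : Submodule (subring 𝒜) M, N.FG ∧ ∀ x ∈ ℳ γ, x ∈ N := by
  classical
  choose u hu hspan using exists_component_generator 𝒜 hfield
  obtain ⟨S, hS⟩ := Module.Finite.fg_top (R := A) (M := M)
  let T : Γ → Finset M := fun γ => S.biUnion fun m =>
    (DirectSum.decompose ℳ m).support.image fun lam =>
      u (γ - lam) • (DirectSum.decompose ℳ m lam : M)
  let N : Γ → Submodule (subring 𝒜) M := fun γ => Submodule.span _ (T γ)
  have mem_gen : ∀ γ lam, ∀ a ∈ 𝒜 (γ - lam), ∀ m ∈ S,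
      a • (DirectSum.decompose ℳ m lam : M) ∈ N γ := by
    intro γ lam a ha m hm
    by_cases h0 : DirectSum.decompose ℳ m lam = 0
    · simp [h0]
    obtain ⟨c, hc, rfl⟩ := hspan _ a ha
    rw [mul_smul]
    refine (N γ).smul_mem (⟨c, hc⟩ : subring 𝒜) (Submodule.subset_span ?_)
    simp only [T, Finset.coe_biUnion, Set.mem_iUnion, Finset.coe_image]
    exact ⟨m, hm, lam, by simpa using h0, rfl⟩
  have smul_mem : ∀ γ lam, ∀ a ∈ 𝒜 lam, ∀ x ∈ N (γ - lam), a • x ∈ N γ := by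
    intro γ lam a ha x hx
    induction hx using Submodule.span_induction with
    | mem x hx =>
      simp only [T, Finset.coe_biUnion, Set.mem_iUnion, Finset.coe_image] at hx
      obtain ⟨m, hm, μ, -, rfl⟩ := hx
      rw [smul_smul]
      refine mem_gen γ μ _ ?_ m hm
      have := SetLike.mul_mem_graded ha (hu (γ - lam - μ))
      rwa [show lam + (γ - lam - μ) = γ - μ by abel] at this
    | zero => simp
    | add x y _ _ hx hy => rw [smul_add]; exact add_mem hx hy
    | smul c x _ hx => rw [smul_comm]; exact (N γ).smul_mem c hx
  have mem_all : ∀ x : M, ∀ γ, (DirectSum.decompose ℳ x γ : M) ∈ N γ := by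
    intro x
    have hx : x ∈ Submodule.span A (S : Set M) := hS ▸ Submodule.mem_top
    induction hx using Submodule.span_induction with
    | mem m hm =>
      intro γ
      simpa using mem_gen γ γ 1 (by simpa using SetLike.GradedOne.one_mem) m hm
    | zero => simp
    | add x y _ _ hx hy =>
      intro γ
      simpa [DirectSum.decompose_add] using add_mem (hx γ) (hy γ)
    | smul a x _ hx =>
      intro γ
      induction a using DirectSum.Decomposition.inductionOn 𝒜 with
      | zero => simp
      | add a b ha hb => simpa [add_smul, DirectSum.decompose_add] using add_mem ha hb
      | @homogeneous lam a =>
        have := DirectSum.decompose_map_of_shift ℳ ℳ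
          (DistribSMul.toAddMonoidHom M (a : A)) lam
          (fun γ x hx => hM γ lam a a.2 x hx) x γ
        rw [DistribSMul.toAddMonoidHom_apply] at this
        rw [this]
        exact smul_mem γ lam a a.2 _ (hx _)
  refine ⟨N γ, ⟨T γ, rfl⟩, fun x hx => ?_⟩
  simpa [DirectSum.decompose_of_mem_same ℳ hx] using mem_all x γ

end GradedField

/-- A product of submodules is isomorphic to the product of the underlying modules. -/
def Submodule.prodEquivProd {K V U : Type*} [Ring K] [AddCommGroup V] [AddCommGroup U]
    [Module K V] [Module K U] (W : Submodule K V) (X : Submodule K U) :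
    W.prod X ≃ₗ[K] W × X where
  toFun x := (⟨x.1.1, x.2.1⟩, ⟨x.1.2, x.2.2⟩)
  invFun x := ⟨(x.1, x.2), x.1.2, x.2.2⟩
  map_add' _ _ := rfl
  map_smul' _ _ := rfl
  left_inv _ := rfl
  right_inv _ := rfl

/-- Cancellation for finite dimensional subspaces, with the resulting isomorphism and its
inverse extended to the ambient spaces. -/
theorem exists_inverse_maps_of_prod_equiv {K : Type*} [Field K]
    {V V' U : Type*} [AddCommGroup V] [AddCommGroup V'] [AddCommGroup U]
    [Module K V] [Module K V'] [Module K U]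
    (W : Submodule K V) (W' : Submodule K V') (X : Submodule K U)
    [FiniteDimensional K W] [FiniteDimensional K W'] [FiniteDimensional K X]
    (e : (V × U) ≃ₗ[K] (V' × U))
    (he : (W.prod X).map (e : (V × U) →ₗ[K] (V' × U)) = W'.prod X) :
    ∃ (f : V →ₗ[K] V') (g : V' →ₗ[K] V), (∀ x ∈ W, f x ∈ W') ∧ (∀ y ∈ W', g y ∈ W) ∧
      (∀ x ∈ W, g (f x) = x) ∧ ∀ y ∈ W', f (g y) = y := by
  have hrank := (((W.prodEquivProd X).symm.trans (e.ofSubmodules _ _ he)).trans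
    (W'.prodEquivProd X)).finrank_eq
  rw [Module.finrank_prod, Module.finrank_prod, Nat.add_right_cancel_iff] at hrank
  let φ : W ≃ₗ[K] W' := LinearEquiv.ofFinrankEq _ _ hrank
  obtain ⟨f, hf⟩ := (W'.subtype ∘ₗ φ.toLinearMap).exists_extend
  obtain ⟨g, hg⟩ := (W.subtype ∘ₗ φ.symm.toLinearMap).exists_extend
  have hf' : ∀ x : W, f x = φ x := fun x => LinearMap.congr_fun hf x
  have hg' : ∀ y : W', g y = φ.symm y := fun y => LinearMap.congr_fun hg y
  refine ⟨f, g, fun x hx => ?_, fun y hy => ?_, fun x hx => ?_, fun y hy => ?_⟩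
  · rw [hf' ⟨x, hx⟩]; exact (φ _).2
  · rw [hg' ⟨y, hy⟩]; exact (φ.symm _).2
  · rw [hf' ⟨x, hx⟩, hg', φ.symm_apply_apply]
  · rw [hg' ⟨y, hy⟩, hf', φ.apply_symm_apply]

theorem Submodule.finiteDimensional_of_le_fg {K V : Type*} [Field K] [AddCommGroup V] [Module K V]
    {W N : Submodule K V} (hN : N.FG) (hle : W ≤ N) : FiniteDimensional K W :=
  have : FiniteDimensional K N := Module.Finite.iff_fg.2 hN
  Submodule.finiteDimensional_of_le hle

section Matricial

variable {Γ : Type*} [AddCommGroup Γ] {A : Type*} [CommRing A]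
  {l : ℕ} {n : Fin l → ℕ}

/-- The matrix unit `a E_{jk}` of the factor `s`, acting on right modules. -/
def opMatrixUnit (s : Fin l) (j k : Fin (n s)) (a : A) : (MatricialAlg A n)ᵐᵒᵖ :=
  op (Pi.single s (Matrix.single j k a))

theorem opMatrixUnit_zero (s : Fin l) (j k : Fin (n s)) :
    opMatrixUnit s j k (0 : A) = 0 := by
  simp [opMatrixUnit]

theorem opMatrixUnit_add (s : Fin l) (j k : Fin (n s)) (a b : A) :
    opMatrixUnit s j k (a + b) = opMatrixUnit s j k a + opMatrixUnit s j k b := by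
  simp [opMatrixUnit, Matrix.single_add, Pi.single_add]

theorem opMatrixUnit_mul (s : Fin l) (i j k : Fin (n s)) (a b : A) :
    opMatrixUnit s j k b * opMatrixUnit s i j a = opMatrixUnit s i k (a * b) := by
  simp [opMatrixUnit, ← op_mul, ← Pi.single_mul]

theorem opMatrixUnit_mul_of_ne {s t : Fin l} {i j : Fin (n s)} {j' k : Fin (n t)} (a b : A)
    (h : (⟨s, j⟩ : Σ s, Fin (n s)) ≠ ⟨t, j'⟩) :
    opMatrixUnit t j' k b * opMatrixUnit s i j a = 0 := by
  rw [opMatrixUnit, opMatrixUnit, ← op_mul]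
  by_cases hst : s = t
  · subst hst
    have hj : j ≠ j' := fun hj => h (by rw [hj])
    rw [← Pi.single_mul, Matrix.single_mul_single_of_ne (h := hj), Pi.single_zero, op_zero]
  · have : (Pi.single s (Matrix.single i j a) : MatricialAlg A n) *
        Pi.single t (Matrix.single j' k b) = 0 := by
      funext r
      by_cases hr : r = s
      · subst hr; simp [Pi.single_eq_of_ne hst]
      · simp [Pi.single_eq_of_ne hr]
    rw [this, op_zero]

theorem smul_opMatrixUnit (s : Fin l) (j k : Fin (n s)) (a b : A) :
    a • opMatrixUnit s j k b = opMatrixUnit s j k (a * b) := by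
  rw [opMatrixUnit, ← op_smul, ← Pi.single_smul, Matrix.smul_single, smul_eq_mul, opMatrixUnit]

theorem sum_opMatrixUnit (r : MatricialAlg A n) :
    ∑ s, ∑ j, ∑ k, opMatrixUnit s j k (r s j k) = op r := by
  simp only [opMatrixUnit, ← Finset.op_sum]
  congr 1
  conv_rhs => rw [← Finset.univ_sum_single r]
  refine Finset.sum_congr rfl fun s _ => ?_
  conv_rhs => rw [Matrix.matrix_eq_sum_single (r s)]
  simp only [← AddMonoidHom.single_apply, map_sum]

theorem sum_opMatrixUnit_diag :
    ∑ s, ∑ j, opMatrixUnit s j j (1 : A) = (1 : (MatricialAlg A n)ᵐᵒᵖ) := by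
  rw [← op_one, ← sum_opMatrixUnit]
  refine Finset.sum_congr rfl fun s _ => Finset.sum_congr rfl fun j _ => ?_
  rw [Finset.sum_eq_single j]
  · simp
  · intro k _ hk
    simp [Matrix.one_apply_ne hk.symm, opMatrixUnit_zero]
  · simp

variable (𝒜 : Γ → AddSubgroup A) (δ : ∀ s : Fin l, Fin (n s) → Γ)

theorem single_mem_matricialGrading {s : Fin l} {j k : Fin (n s)} {lam : Γ} {a : A}
    (ha : a ∈ 𝒜 (lam + δ s k - δ s j)) :
    Pi.single s (Matrix.single j k a) ∈ matricialGrading 𝒜 δ lam := by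
  intro t p q
  by_cases ht : t = s
  · subst ht
    rw [Pi.single_eq_same, Matrix.single_apply]
    split_ifs with h
    · obtain ⟨rfl, rfl⟩ := h
      exact ha
    · exact zero_mem _
  · rw [Pi.single_eq_of_ne ht]
    exact zero_mem _

theorem algebraMap_mem_matricialGrading {lam : Γ} {a : A} (ha : a ∈ 𝒜 lam) :
    algebraMap A (MatricialAlg A n) a ∈ matricialGrading 𝒜 δ lam := by
  intro t p q
  rw [Pi.algebraMap_apply, Matrix.algebraMap_matrix_apply]
  split_ifs with h
  · subst h
    simpa using ha
  · exact zero_mem _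

/-- The family `ℳ` is compatible with the right action of the graded matricial algebra. -/
def IsGradedAction {M : Type*} [AddCommGroup M] [Module (MatricialAlg A n)ᵐᵒᵖ M]
    (ℳ : Γ → AddSubgroup M) : Prop :=
  ∀ (γ lam : Γ) (x : M) (a : MatricialAlg A n),
    x ∈ ℳ γ → a ∈ matricialGrading 𝒜 δ lam → (op a) • x ∈ ℳ (γ + lam)

section Action

variable {𝒜 δ} {M : Type*} [AddCommGroup M] [Module (MatricialAlg A n)ᵐᵒᵖ M]
  {ℳ : Γ → AddSubgroup M}

theorem IsGradedAction.opMatrixUnit_smul_mem (hM : IsGradedAction 𝒜 δ ℳ) {s : Fin l}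
    {j k : Fin (n s)} {γ γ' : Γ} {a : A} {x : M} (hx : x ∈ ℳ γ)
    (ha : a ∈ 𝒜 (γ' + δ s k - (γ + δ s j))) :
    opMatrixUnit s j k a • x ∈ ℳ γ' := by
  have := hM γ (γ' - γ) x _ hx (single_mem_matricialGrading 𝒜 δ (s := s) (j := j) (k := k)
    (a := a) (by rwa [show γ' - γ + δ s k - δ s j = γ' + δ s k - (γ + δ s j) by abel]))
  rwa [add_sub_cancel] at this

variable [Module A M] [IsScalarTower A (MatricialAlg A n)ᵐᵒᵖ M]

theorem IsGradedAction.smul_mem (hM : IsGradedAction 𝒜 δ ℳ) (γ lam : Γ) (a : A) (ha : a ∈ 𝒜 lam)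
    (x : M) (hx : x ∈ ℳ γ) :
    a • x ∈ ℳ (γ + lam) := by
  rw [← algebraMap_smul (MatricialAlg A n)ᵐᵒᵖ]
  exact hM γ lam x _ hx (algebraMap_mem_matricialGrading 𝒜 δ ha)

end Action

theorem smul_opMatrixUnit_smul {M : Type*} [AddCommGroup M] [Module (MatricialAlg A n)ᵐᵒᵖ M]
    [Module A M] [IsScalarTower A (MatricialAlg A n)ᵐᵒᵖ M]
    (s : Fin l) (j k : Fin (n s)) (a b : A) (x : M) :
    a • opMatrixUnit s j k b • x = opMatrixUnit s j k (a * b) • x := by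
  rw [← smul_assoc, smul_opMatrixUnit]

variable {𝒜 δ} [DecidableEq Γ] [GradedRing 𝒜]

/-- The degree `γ` part of the Peirce component `M E_{jj}` of the factor `s`. -/
def peirceComponent {M : Type*} [AddCommGroup M] [Module (MatricialAlg A n)ᵐᵒᵖ M]
    [Module A M] [IsScalarTower A (MatricialAlg A n)ᵐᵒᵖ M]
    {ℳ : Γ → AddSubgroup M} (hM : IsGradedAction 𝒜 δ ℳ) (s : Fin l) (i : Fin (n s) × Γ) :
    Submodule (subring 𝒜) M where
  carrier := {x | x ∈ ℳ i.2 ∧ opMatrixUnit s i.1 i.1 (1 : A) • x = x}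
  add_mem' := fun hx hy => ⟨add_mem hx.1 hy.1, by rw [smul_add, hx.2, hy.2]⟩
  zero_mem' := ⟨zero_mem _, smul_zero _⟩
  smul_mem' := fun c x hx => ⟨by
    have := hM.smul_mem i.2 0 c c.2 x hx.1
    rwa [add_zero] at this, by
    rw [smul_comm, hx.2]⟩

section Components

variable {M : Type*} [AddCommGroup M] [Module (MatricialAlg A n)ᵐᵒᵖ M]
  [Module A M] [IsScalarTower A (MatricialAlg A n)ᵐᵒᵖ M]
  {ℳ : Γ → AddSubgroup M} (hM : IsGradedAction 𝒜 δ ℳ)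

theorem opMatrixUnit_smul_mem_peirceComponent {s : Fin l} {j k : Fin (n s)} {γ γ' : Γ} {a : A}
    {x : M} (hx : x ∈ ℳ γ) (ha : a ∈ 𝒜 (γ' + δ s k - (γ + δ s j))) :
    opMatrixUnit s j k a • x ∈ peirceComponent hM s (k, γ') :=
  ⟨hM.opMatrixUnit_smul_mem hx ha, by rw [smul_smul, opMatrixUnit_mul, mul_one]⟩

theorem peirceComponent_induction [DirectSum.Decomposition ℳ] {p : M → Prop}
    (zero : p 0) (add : ∀ x y, p x → p y → p (x + y))
    (mem : ∀ s i, ∀ x ∈ peirceComponent hM s i, p x) (x : M) : p x := by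
  induction x using DirectSum.Decomposition.inductionOn ℳ with
  | zero => exact zero
  | add x y hx hy => exact add x y hx hy
  | @homogeneous γ x =>
    rw [← one_smul (MatricialAlg A n)ᵐᵒᵖ (x : M), ← sum_opMatrixUnit_diag]
    simp only [Finset.sum_smul]
    refine Finset.sum_induction _ p add zero fun s _ =>
      Finset.sum_induction _ p add zero fun j _ => mem s (j, γ) _ ?_
    exact opMatrixUnit_smul_mem_peirceComponent hM x.2 (by simpa using SetLike.GradedOne.one_mem)

end Components

theorem opMatrixUnit_induction {p : (MatricialAlg A n)ᵐᵒᵖ → Prop} (zero : p 0)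
    (add : ∀ x y, p x → p y → p (x + y))
    (unit : ∀ s j k γ, ∀ a ∈ 𝒜 γ, p (opMatrixUnit s j k a)) (r : (MatricialAlg A n)ᵐᵒᵖ) :
    p r := by
  rw [← op_unop r, ← sum_opMatrixUnit]
  refine Finset.sum_induction _ p add zero fun s _ => Finset.sum_induction _ p add zero fun j _ =>
    Finset.sum_induction _ p add zero fun k _ => ?_
  generalize unop r s j k = a
  induction a using DirectSum.Decomposition.inductionOn 𝒜 with
  | zero => rwa [opMatrixUnit_zero]
  | add a b ha hb => rw [opMatrixUnit_add]; exact add _ _ ha hb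
  | homogeneous a => exact unit s j k _ a a.2

section Maps

variable {P Q : Type*} [AddCommGroup P] [AddCommGroup Q]
  [Module (MatricialAlg A n)ᵐᵒᵖ P] [Module (MatricialAlg A n)ᵐᵒᵖ Q] [Module A P] [Module A Q]
  [IsScalarTower A (MatricialAlg A n)ᵐᵒᵖ P] [IsScalarTower A (MatricialAlg A n)ᵐᵒᵖ Q]
  {ℳP : Γ → AddSubgroup P} {ℳQ : Γ → AddSubgroup Q}
  (hP : IsGradedAction 𝒜 δ ℳP) (hQ : IsGradedAction 𝒜 δ ℳQ)

/-- A linear map preserving the Peirce components preserves degrees. -/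
theorem map_mem_of_peirceComponent (Φ : P →ₗ[(MatricialAlg A n)ᵐᵒᵖ] Q)
    (hΦ : ∀ s i, ∀ x ∈ peirceComponent hP s i, Φ x ∈ peirceComponent hQ s i) {γ : Γ} {x : P}
    (hx : x ∈ ℳP γ) : Φ x ∈ ℳQ γ := by
  rw [← one_smul (MatricialAlg A n)ᵐᵒᵖ x, ← sum_opMatrixUnit_diag]
  simp only [Finset.sum_smul, map_sum]
  exact sum_mem fun s _ => sum_mem fun j _ => (hΦ s (j, γ) _
    (opMatrixUnit_smul_mem_peirceComponent hP hx (by simpa using SetLike.GradedOne.one_mem))).1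

variable [DirectSum.Decomposition ℳP]

/-- An additive family on the Peirce components that commutes with the homogeneous matrix units
glues to a linear map. -/
theorem exists_linearMap_of_peirceComponent (T : ∀ s, Fin (n s) × Γ → P →+ Q)
    (hmem : ∀ s i, ∀ x ∈ peirceComponent hP s i, T s i x ∈ peirceComponent hQ s i)
    (hcomm : ∀ s j k γ γ', ∀ a ∈ 𝒜 (γ' + δ s k - (γ + δ s j)), ∀ x : P,
      T s (k, γ') (opMatrixUnit s j k a • x) = opMatrixUnit s j k a • T s (j, γ) x) :
    ∃ Φ : P →ₗ[(MatricialAlg A n)ᵐᵒᵖ] Q,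
      ∀ s i, ∀ x ∈ peirceComponent hP s i, Φ x = T s i x := by
  let C : ∀ s, Fin (n s) → P →+ Q := fun s j =>
    (DirectSum.toAddMonoid fun γ => (T s (j, γ)).comp (ℳP γ).subtype).comp
      ((DirectSum.decomposeAddEquiv ℳP).toAddMonoidHom.comp
        (DistribSMul.toAddMonoidHom P (opMatrixUnit s j j (1 : A))))
  let Φ : P →+ Q := ∑ t : Σ s, Fin (n s), C t.1 t.2
  have hC : ∀ s j γ, ∀ x ∈ peirceComponent hP s (j, γ), C s j x = T s (j, γ) x := by
    rintro s j γ x ⟨hx, hjx⟩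
    simp only [C, AddMonoidHom.comp_apply, DistribSMul.toAddMonoidHom_apply]
    rw [hjx]
    change DirectSum.toAddMonoid _ (DirectSum.decompose ℳP x) = _
    rw [DirectSum.decompose_of_mem ℳP hx, DirectSum.toAddMonoid_of]
    rfl
  have hC' : ∀ s j γ, ∀ x ∈ peirceComponent hP s (j, γ), ∀ t : Σ s, Fin (n s),
      t ≠ ⟨s, j⟩ → C t.1 t.2 x = 0 := by
    rintro s j γ x ⟨hx, hjx⟩ t ht
    simp only [C, AddMonoidHom.comp_apply, DistribSMul.toAddMonoidHom_apply]
    rw [← hjx, smul_smul, opMatrixUnit_mul_of_ne 1 1 ht.symm, zero_smul, map_zero, map_zero]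
  have hΦ : ∀ s i, ∀ x ∈ peirceComponent hP s i, Φ x = T s i x := by
    rintro s ⟨j, γ⟩ x hx
    simp only [Φ, AddMonoidHom.finsetSum_apply]
    rw [Finset.sum_eq_single ⟨s, j⟩ (fun t _ ht => hC' s j γ x hx t ht)
      (fun h => absurd (Finset.mem_univ _) h)]
    exact hC s j γ x hx
  refine ⟨{ Φ with map_smul' := fun r x => ?_ }, hΦ⟩
  change Φ (r • x) = r • Φ x
  induction x using peirceComponent_induction hP with
  | zero => simp
  | add x y hx hy => simp only [smul_add, map_add, hx, hy]
  | mem s i x hx =>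
    obtain ⟨j, γ⟩ := i
    induction r using opMatrixUnit_induction (𝒜 := 𝒜) with
    | zero => simp
    | add r r' hr hr' => simp only [add_smul, map_add, hr, hr']
    | unit t j' k lam a ha =>
      by_cases h : (⟨s, j⟩ : Σ s, Fin (n s)) = ⟨t, j'⟩
      · obtain ⟨rfl, h⟩ := Sigma.mk.inj_iff.1 h
        obtain rfl := eq_of_heq h
        have ha' : a ∈ 𝒜 (lam + (γ + δ s j) - δ s k + δ s k - (γ + δ s j)) := by
          rwa [sub_add_cancel, add_sub_cancel_right]
        rw [hΦ s (j, γ) x hx, ← hcomm s j k γ _ a ha']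
        exact hΦ _ _ _ (opMatrixUnit_smul_mem_peirceComponent hP hx.1 ha')
      · have hTx := (hmem s (j, γ) x hx).2
        have hx2 := hx.2
        rw [hΦ s (j, γ) x hx, ← hTx, ← hx2, smul_smul, smul_smul,
          opMatrixUnit_mul_of_ne 1 a h, zero_smul, zero_smul, map_zero]

/-- Linear maps between the Peirce components at chosen representatives, transported along
homogeneous units, extend to a linear map. -/
theorem exists_linearMap_of_representatives
    (ρ : ∀ s, Fin (n s) × Γ → Fin (n s) × Γ) (u v : ∀ s, Fin (n s) × Γ → A)
    (hu : ∀ s i, u s i ∈ 𝒜 (i.2 + δ s i.1 - ((ρ s i).2 + δ s (ρ s i).1)))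
    (hv : ∀ s i, v s i ∈ 𝒜 ((ρ s i).2 + δ s (ρ s i).1 - (i.2 + δ s i.1)))
    (huv : ∀ s i, u s i * v s i = 1)
    (hρ : ∀ s i j, ∀ a ∈ 𝒜 (j.2 + δ s j.1 - (i.2 + δ s i.1)), a ≠ 0 → ρ s i = ρ s j)
    (f : ∀ s, Fin (n s) × Γ → P →ₗ[subring 𝒜] Q)
    (hf : ∀ s i, ∀ x ∈ peirceComponent hP s i, f s i x ∈ peirceComponent hQ s i) :
    ∃ Φ : P →ₗ[(MatricialAlg A n)ᵐᵒᵖ] Q, ∀ s i, ∀ x ∈ peirceComponent hP s i,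
      Φ x ∈ peirceComponent hQ s i ∧
      Φ x = opMatrixUnit s (ρ s i).1 i.1 (u s i) •
        f s (ρ s i) (opMatrixUnit s i.1 (ρ s i).1 (v s i) • x) := by
  let T : ∀ s, Fin (n s) × Γ → P →+ Q := fun s i =>
    (DistribSMul.toAddMonoidHom Q (opMatrixUnit s (ρ s i).1 i.1 (u s i))).comp
      ((f s (ρ s i)).toAddMonoidHom.comp
        (DistribSMul.toAddMonoidHom P (opMatrixUnit s i.1 (ρ s i).1 (v s i))))
  have hT : ∀ s i x, T s i x = opMatrixUnit s (ρ s i).1 i.1 (u s i) •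
        f s (ρ s i) (opMatrixUnit s i.1 (ρ s i).1 (v s i) • x) := fun _ _ _ => rfl
  have hmem : ∀ s i, ∀ x ∈ peirceComponent hP s i, T s i x ∈ peirceComponent hQ s i := by
    intro s i x hx
    rw [hT]
    exact opMatrixUnit_smul_mem_peirceComponent hQ
      (hf _ _ _ (opMatrixUnit_smul_mem_peirceComponent hP hx.1 (hv s i))).1 (hu s i)
  obtain ⟨Φ, hΦ⟩ := exists_linearMap_of_peirceComponent hP hQ T hmem (by
    intro s j k γ γ' a ha x
    by_cases h0 : a = 0
    · simp [h0, opMatrixUnit_zero]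
    have hr := hρ s (j, γ) (k, γ') a ha h0
    rw [hT, hT]
    have hu1 := hu s (j, γ)
    have hv1 := hv s (k, γ')
    have huv1 := huv s (j, γ)
    have huv2 := huv s (k, γ')
    rw [← hr] at hv1 ⊢
    generalize ρ s (j, γ) = r at *
    generalize u s (j, γ) = u1, v s (j, γ) = v1, u s (k, γ') = u2, v s (k, γ') = v2 at *
    have hc : a * v2 * u1 ∈ 𝒜 0 := by
      have := SetLike.mul_mem_graded (SetLike.mul_mem_graded ha hv1) hu1
      convert this using 2
      simp only
      abel
    have h1 : opMatrixUnit s j r.1 (a * v2) • x =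
        (⟨a * v2 * u1, hc⟩ : subring 𝒜) • opMatrixUnit s j r.1 v1 • x := by
      change _ = (a * v2 * u1) • opMatrixUnit s j r.1 v1 • x
      rw [smul_opMatrixUnit_smul, mul_assoc _ u1, huv1, mul_one]
    simp only
    rw [smul_smul, opMatrixUnit_mul, h1, map_smul, smul_comm]
    change (a * v2 * u1) • opMatrixUnit s r.1 k u2 • (_ : Q) = _
    rw [smul_opMatrixUnit_smul, smul_smul, opMatrixUnit_mul]
    congr 2
    linear_combination (a * u1) * huv2)
  exact ⟨Φ, fun s i x hx => ⟨hΦ s i x hx ▸ hmem s i x hx, hΦ s i x hx⟩⟩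

variable [DirectSum.Decomposition ℳQ]

/-- Mutually inverse maps on the Peirce components give a graded isomorphism. -/
theorem exists_graded_equiv_of_peirceComponent
    (hfield : ∀ (γ : Γ) (a : A), a ∈ 𝒜 γ → a ≠ 0 → IsUnit a)
    (h : ∀ s i, ∃ (f : P →ₗ[subring 𝒜] Q) (g : Q →ₗ[subring 𝒜] P),
      (∀ x ∈ peirceComponent hP s i, f x ∈ peirceComponent hQ s i) ∧
      (∀ y ∈ peirceComponent hQ s i, g y ∈ peirceComponent hP s i) ∧
      (∀ x ∈ peirceComponent hP s i, g (f x) = x) ∧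
      ∀ y ∈ peirceComponent hQ s i, f (g y) = y) :
    ∃ e : P ≃ₗ[(MatricialAlg A n)ᵐᵒᵖ] Q, ∀ γ : Γ, e '' (ℳP γ : Set P) = (ℳQ γ : Set Q) := by
  choose f g hf hg hgf hfg using h
  choose ρ u v hu hv huv hρ using fun s => exists_representatives 𝒜 hfield
    (fun i : Fin (n s) × Γ => i.2 + δ s i.1)
  obtain ⟨Φ, hΦ⟩ := exists_linearMap_of_representatives hP hQ ρ u v hu hv huv hρ f hf
  obtain ⟨Ψ, hΨ⟩ := exists_linearMap_of_representatives hQ hP ρ u v hu hv huv hρ g hg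
  have hΨΦ : ∀ x, Ψ (Φ x) = x := by
    intro x
    induction x using peirceComponent_induction hP with
    | zero => simp
    | add x y hx hy => rw [map_add, map_add, hx, hy]
    | mem s i x hx =>
      have hy := opMatrixUnit_smul_mem_peirceComponent hP hx.1 (hv s i)
      rw [(hΨ s i _ (hΦ s i x hx).1).2, (hΦ s i x hx).2, smul_smul (opMatrixUnit s i.1 _ _),
        opMatrixUnit_mul, huv, (hf s (ρ s i) _ hy).2, hgf s (ρ s i) _ hy, smul_smul,
        opMatrixUnit_mul, mul_comm, huv, hx.2]
  have hΦΨ : ∀ x, Φ (Ψ x) = x := by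
    intro x
    induction x using peirceComponent_induction hQ with
    | zero => simp
    | add x y hx hy => rw [map_add, map_add, hx, hy]
    | mem s i x hx =>
      have hy := opMatrixUnit_smul_mem_peirceComponent hQ hx.1 (hv s i)
      rw [(hΦ s i _ (hΨ s i x hx).1).2, (hΨ s i x hx).2, smul_smul (opMatrixUnit s i.1 _ _),
        opMatrixUnit_mul, huv, (hg s (ρ s i) _ hy).2, hfg s (ρ s i) _ hy, smul_smul,
        opMatrixUnit_mul, mul_comm, huv, hx.2]
  refine ⟨LinearEquiv.ofLinearMap Φ Ψ (LinearMap.ext hΦΨ) (LinearMap.ext hΨΦ), fun γ => ?_⟩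
  refine Set.Subset.antisymm ?_ fun y hy => ⟨Ψ y, ?_, hΦΨ y⟩
  · rintro _ ⟨x, hx, rfl⟩
    exact map_mem_of_peirceComponent hP hQ Φ (fun s i x hx => (hΦ s i x hx).1) hx
  · exact map_mem_of_peirceComponent hQ hP Ψ (fun s i x hx => (hΨ s i x hx).1) hy

end Maps

theorem exists_fg_peirceComponent_le
    (hfield : ∀ (γ : Γ) (a : A), a ∈ 𝒜 γ → a ≠ 0 → IsUnit a)
    {M : Type*} [AddCommGroup M] [Module (MatricialAlg A n)ᵐᵒᵖ M]
    [Module A M] [IsScalarTower A (MatricialAlg A n)ᵐᵒᵖ M]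
    [Module.Finite (MatricialAlg A n)ᵐᵒᵖ M]
    {ℳ : Γ → AddSubgroup M} [DirectSum.Decomposition ℳ] (hM : IsGradedAction 𝒜 δ ℳ)
    (s : Fin l) (i : Fin (n s) × Γ) :
    ∃ N : Submodule (subring 𝒜) M, N.FG ∧ peirceComponent hM s i ≤ N := by
  have : Module.Finite A M := Module.Finite.trans (MatricialAlg A n)ᵐᵒᵖ M
  obtain ⟨N, hN, h⟩ := exists_fg_component_le 𝒜 hfield ℳ hM.smul_mem i.2
  exact ⟨N, hN, fun x hx => h x hx.1⟩

/-- A graded isomorphism `P × G ≃ Q × G` restricts to the Peirce components. -/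
theorem map_prod_peirceComponent {P Q G : Type*}
    [AddCommGroup P] [AddCommGroup Q] [AddCommGroup G]
    [Module (MatricialAlg A n)ᵐᵒᵖ P] [Module (MatricialAlg A n)ᵐᵒᵖ Q]
    [Module (MatricialAlg A n)ᵐᵒᵖ G] [Module A P] [Module A Q] [Module A G]
    [IsScalarTower A (MatricialAlg A n)ᵐᵒᵖ P] [IsScalarTower A (MatricialAlg A n)ᵐᵒᵖ Q]
    [IsScalarTower A (MatricialAlg A n)ᵐᵒᵖ G]
    {ℳP : Γ → AddSubgroup P} {ℳQ : Γ → AddSubgroup Q} {ℳG : Γ → AddSubgroup G}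
    (hP : IsGradedAction 𝒜 δ ℳP) (hQ : IsGradedAction 𝒜 δ ℳQ) (hG : IsGradedAction 𝒜 δ ℳG)
    (e : (P × G) ≃ₗ[(MatricialAlg A n)ᵐᵒᵖ] (Q × G))
    (he : ∀ γ : Γ, e '' ((ℳP γ).prod (ℳG γ) : AddSubgroup (P × G)) =
      ((ℳQ γ).prod (ℳG γ) : AddSubgroup (Q × G)))
    (s : Fin l) (i : Fin (n s) × Γ) :
    ((peirceComponent hP s i).prod (peirceComponent hG s i)).map
        (e.restrictScalars (subring 𝒜) : (P × G) →ₗ[subring 𝒜] (Q × G)) =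
      (peirceComponent hQ s i).prod (peirceComponent hG s i) := by
  have mem_iff : ∀ z : P × G,
      z ∈ (peirceComponent hP s i).prod (peirceComponent hG s i) ↔
        z ∈ (ℳP i.2).prod (ℳG i.2) ∧ opMatrixUnit s i.1 i.1 (1 : A) • z = z := fun z =>
    ⟨fun h => ⟨⟨h.1.1, h.2.1⟩, Prod.ext h.1.2 h.2.2⟩, fun h =>
      ⟨⟨h.1.1, congrArg Prod.fst h.2⟩, ⟨h.1.2, congrArg Prod.snd h.2⟩⟩⟩
  have mem_iff' : ∀ z : Q × G,
      z ∈ (peirceComponent hQ s i).prod (peirceComponent hG s i) ↔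
        z ∈ (ℳQ i.2).prod (ℳG i.2) ∧ opMatrixUnit s i.1 i.1 (1 : A) • z = z := fun z =>
    ⟨fun h => ⟨⟨h.1.1, h.2.1⟩, Prod.ext h.1.2 h.2.2⟩, fun h =>
      ⟨⟨h.1.1, congrArg Prod.fst h.2⟩, ⟨h.1.2, congrArg Prod.snd h.2⟩⟩⟩
  have hdeg : ∀ w : Q × G,
      (∃ z, z ∈ (ℳP i.2).prod (ℳG i.2) ∧ e z = w) ↔ w ∈ (ℳQ i.2).prod (ℳG i.2) :=
    fun w => Set.ext_iff.1 (he i.2) w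
  ext w
  rw [mem_iff', ← hdeg]
  constructor
  · rintro ⟨z, hz, rfl⟩
    obtain ⟨hz, hz'⟩ := (mem_iff z).1 hz
    refine ⟨⟨z, hz, rfl⟩, ?_⟩
    change _ • e z = e z
    rw [← map_smul, hz']
  · rintro ⟨⟨z, hz, rfl⟩, hw⟩
    refine ⟨z, (mem_iff z).2 ⟨hz, e.injective ?_⟩, rfl⟩
    rw [map_smul, hw]

end Matricial

theorem graded_matricial_cancellation
    {Γ : Type*} [AddCommGroup Γ] [DecidableEq Γ]
    {A : Type*} [CommRing A] [Nontrivial A]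
    (𝒜 : Γ → AddSubgroup A) [GradedRing 𝒜]
    (hfield : ∀ (γ : Γ) (a : A), a ∈ 𝒜 γ → a ≠ 0 → IsUnit a)
    {l : ℕ} {n : Fin l → ℕ} (δ : ∀ s : Fin l, Fin (n s) → Γ)
    {P Q G : Type*} [AddCommGroup P] [AddCommGroup Q] [AddCommGroup G]
    [Module (MatricialAlg A n)ᵐᵒᵖ P] [Module (MatricialAlg A n)ᵐᵒᵖ Q]
    [Module (MatricialAlg A n)ᵐᵒᵖ G]
    (ℳP : Γ → AddSubgroup P) (ℳQ : Γ → AddSubgroup Q) (ℳG : Γ → AddSubgroup G)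
    [DirectSum.Decomposition ℳP] [DirectSum.Decomposition ℳQ]
    [DirectSum.Decomposition ℳG]
    (hP : ∀ (γ lam : Γ) (x : P) (a : MatricialAlg A n),
      x ∈ ℳP γ → a ∈ matricialGrading 𝒜 δ lam → (op a) • x ∈ ℳP (γ + lam))
    (hQ : ∀ (γ lam : Γ) (x : Q) (a : MatricialAlg A n),
      x ∈ ℳQ γ → a ∈ matricialGrading 𝒜 δ lam → (op a) • x ∈ ℳQ (γ + lam))
    (hG : ∀ (γ lam : Γ) (x : G) (a : MatricialAlg A n),
      x ∈ ℳG γ → a ∈ matricialGrading 𝒜 δ lam → (op a) • x ∈ ℳG (γ + lam))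
    [Module.Finite (MatricialAlg A n)ᵐᵒᵖ P] [Module.Projective (MatricialAlg A n)ᵐᵒᵖ P]
    [Module.Finite (MatricialAlg A n)ᵐᵒᵖ Q] [Module.Projective (MatricialAlg A n)ᵐᵒᵖ Q]
    [Module.Finite (MatricialAlg A n)ᵐᵒᵖ G] [Module.Projective (MatricialAlg A n)ᵐᵒᵖ G]
    (hiso : ∃ e : (P × G) ≃ₗ[(MatricialAlg A n)ᵐᵒᵖ] (Q × G),
      ∀ γ : Γ, (⇑e) '' (((ℳP γ).prod (ℳG γ) : AddSubgroup (P × G)) : Set (P × G)) =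
        (((ℳQ γ).prod (ℳG γ) : AddSubgroup (Q × G)) : Set (Q × G))) :
    ∃ e : P ≃ₗ[(MatricialAlg A n)ᵐᵒᵖ] Q,
      ∀ γ : Γ, (⇑e) '' ((ℳP γ : AddSubgroup P) : Set P) = ((ℳQ γ : AddSubgroup Q) : Set Q) := by
  have hP : IsGradedAction 𝒜 δ ℳP := hP
  have hQ : IsGradedAction 𝒜 δ ℳQ := hQ
  have hG : IsGradedAction 𝒜 δ ℳG := hG
  let _ : Module A P := Module.compHom P (algebraMap A (MatricialAlg A n)ᵐᵒᵖ)
  let _ : Module A Q := Module.compHom Q (algebraMap A (MatricialAlg A n)ᵐᵒᵖ)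
  let _ : Module A G := Module.compHom G (algebraMap A (MatricialAlg A n)ᵐᵒᵖ)
  have : IsScalarTower A (MatricialAlg A n)ᵐᵒᵖ P := .of_algebraMap_smul fun _ _ => rfl
  have : IsScalarTower A (MatricialAlg A n)ᵐᵒᵖ Q := .of_algebraMap_smul fun _ _ => rfl
  have : IsScalarTower A (MatricialAlg A n)ᵐᵒᵖ G := .of_algebraMap_smul fun _ _ => rfl
  obtain ⟨e, he⟩ := hiso
  refine exists_graded_equiv_of_peirceComponent hP hQ hfield fun s i => ?_
  obtain ⟨NP, hNP, hleP⟩ := exists_fg_peirceComponent_le hfield hP s i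
  obtain ⟨NQ, hNQ, hleQ⟩ := exists_fg_peirceComponent_le hfield hQ s i
  obtain ⟨NG, hNG, hleG⟩ := exists_fg_peirceComponent_le hfield hG s i
  let _ : Field (subring 𝒜) := (isField_gradeZero 𝒜 hfield).toField
  have := Submodule.finiteDimensional_of_le_fg hNP hleP
  have := Submodule.finiteDimensional_of_le_fg hNQ hleQ
  have := Submodule.finiteDimensional_of_le_fg hNG hleG
  exact exists_inverse_maps_of_prod_equiv _ _ _ (e.restrictScalars (subring 𝒜))
    (map_prod_peirceComponent hP hQ hG e he s i)
end
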